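/- Let λ > 0, let c : ℝ → ℝ be C¹ with c(u) > 0, and let u be a C³ function on an open subset U of ℝ² satisfying equation (E2): u_{tt} − c(u)² u_{xx} − 2λ c(u) c'(u) (u_x)² = 0. Let X be a C² function on U with X_t − c(u) X_x = 0 and X_x > 0 on U. Define R := u_t + c(u) u_x, S := u_t − c(u) u_x, and p := (1 + R²)^{1/(2λ)} / X_x. Then pointwise: p_t − c(u) p_x = (c'(u)/(2 c(u))) · ((1 + R²)^{1/(2λ)−1} / X_x) · [ ((λ−1)/λ) R S² − ((λ−1)/λ) R² S − R + S ]. -/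

import Mathlib

/-!
Write `L = ∂_t - c(u) ∂_x` and note `c(u) u_x = (R - S) / 2`. The equation for `u` and the symmetry
of the second derivatives give `L R = c' u_x (2 λ c u_x + S)`. Differentiating the identity
`X_t = c(u) X_x` in `x` and using the symmetry for `X` gives `L X_x = c' u_x X_x`. The quotient and
chain rules for the derivation `L` then yield
`L p = (1 + R²)^(1/(2λ) - 1) / X_x * (R / λ * L R - (1 + R²) * c' u_x)`, and the claim is algebra.
-/

open Real

/-- Partial derivative in the spatial direction `x` (first coordinate). -/
noncomputable def px (φ : ℝ × ℝ → ℝ) (p : ℝ × ℝ) : ℝ := fderiv ℝ φ p (1, 0)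

/-- Partial derivative in the time direction `t` (second coordinate). -/
noncomputable def pt (φ : ℝ × ℝ → ℝ) (p : ℝ × ℝ) : ℝ := fderiv ℝ φ p (0, 1)

lemma differentiableAt_fderiv_apply {f : ℝ × ℝ → ℝ} {z : ℝ × ℝ} (hf : ContDiffAt ℝ 2 f z)
    (v : ℝ × ℝ) : DifferentiableAt ℝ (fun q => fderiv ℝ f q v) z := by
  have h : DifferentiableAt ℝ (fderiv ℝ f) z :=
    (hf.fderiv_right (m := 1) (by norm_num)).differentiableAt (by norm_num)
  exact h.clm_apply (differentiableAt_const v)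

lemma px_pt_comm {f : ℝ × ℝ → ℝ} {z : ℝ × ℝ} (hf : ContDiffAt ℝ 2 f z) :
    px (pt f) z = pt (px f) z := by
  have h : DifferentiableAt ℝ (fderiv ℝ f) z :=
    (hf.fderiv_right (m := 1) (by norm_num)).differentiableAt (by norm_num)
  have key : ∀ v w : ℝ × ℝ,
      fderiv ℝ (fun q => fderiv ℝ f q v) z w = fderiv ℝ (fderiv ℝ f) z w v := by
    intro v w
    have := h.hasFDerivAt.clm_apply (hasFDerivAt_const v z)
    rw [this.fderiv]
    simp
  have hsymm : IsSymmSndFDerivAt ℝ f z := hf.isSymmSndFDerivAt (by simp)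
  change fderiv ℝ (fun q => fderiv ℝ f q (0, 1)) z (1, 0)
    = fderiv ℝ (fun q => fderiv ℝ f q (1, 0)) z (0, 1)
  rw [key, key]
  exact hsymm.eq _ _

/-- let `u` be a `C³` solution of (E2)
`u_{tt} − c(u)² u_{xx} − 2λ c(u) c'(u) (u_x)² = 0`, `X` a `C²` function with
`X_t − c(u) X_x = 0` and `X_x > 0`.  With `R := u_t + c(u)u_x`, `S := u_t − c(u)u_x`
and `p := (1+R²)^{1/(2λ)}/X_x`, one has
`p_t − c(u) p_x = (c'/(2c)) ((1+R²)^{1/(2λ)−1}/X_x) [((λ−1)/λ)RS² − ((λ−1)/λ)R²S − R + S]`. -/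
theorem stmt16 (lam : ℝ) (hlam : 0 < lam)
    (c : ℝ → ℝ) (hc : ContDiff ℝ 1 c) (hcpos : ∀ z : ℝ, 0 < c z)
    (U : Set (ℝ × ℝ)) (hU : IsOpen U) (u X : ℝ × ℝ → ℝ)
    (hu : ContDiffOn ℝ 3 u U) (hX : ContDiffOn ℝ 2 X U)
    (hE2 : ∀ p ∈ U,
      pt (pt u) p - (c (u p)) ^ 2 * px (px u) p
        - 2 * lam * c (u p) * deriv c (u p) * (px u p) ^ 2 = 0)
    (hXchar : ∀ p ∈ U, pt X p - c (u p) * px X p = 0)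
    (hXx : ∀ p ∈ U, 0 < px X p) :
    ∀ z ∈ U,
      pt (fun q => (1 + (pt u q + c (u q) * px u q) ^ 2) ^ (1/(2*lam)) / px X q) z
        - c (u z) * px (fun q =>
            (1 + (pt u q + c (u q) * px u q) ^ 2) ^ (1/(2*lam)) / px X q) z
      = (deriv c (u z) / (2 * c (u z))) *
          ((1 + (pt u z + c (u z) * px u z) ^ 2) ^ (1/(2*lam) - 1) / px X z) *
          (((lam - 1)/lam) * (pt u z + c (u z) * px u z)
              * (pt u z - c (u z) * px u z) ^ 2
            - ((lam - 1)/lam) * (pt u z + c (u z) * px u z) ^ 2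
              * (pt u z - c (u z) * px u z)
            - (pt u z + c (u z) * px u z) + (pt u z - c (u z) * px u z)) := by
  intro z hz
  have hUz : U ∈ nhds z := hU.mem_nhds hz
  have hu2 : ContDiffAt ℝ 2 u z := (hu.contDiffAt hUz).of_le (by norm_num)
  have hX2 : ContDiffAt ℝ 2 X z := hX.contDiffAt hUz
  have hdu : HasFDerivAt u (fderiv ℝ u z) z :=
    (hu2.differentiableAt (by norm_num)).hasFDerivAt
  have hdut : HasFDerivAt (pt u) (fderiv ℝ (pt u) z) z :=
    (differentiableAt_fderiv_apply hu2 (0, 1)).hasFDerivAt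
  have hdux : HasFDerivAt (px u) (fderiv ℝ (px u) z) z :=
    (differentiableAt_fderiv_apply hu2 (1, 0)).hasFDerivAt
  have hdXx : HasFDerivAt (px X) (fderiv ℝ (px X) z) z :=
    (differentiableAt_fderiv_apply hX2 (1, 0)).hasFDerivAt
  have hdc : HasFDerivAt (fun q => c (u q)) (deriv c (u z) • fderiv ℝ u z) z :=
    ((hc.differentiable (by norm_num)) (u z)).hasDerivAt.comp_hasFDerivAt z hdu
  -- The characteristic equation holds near `z`, so it may be differentiated in `x`.
  have hXtx : pt (px X) z = c (u z) * px (px X) z + px X z * (deriv c (u z) * px u z) := by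
    rw [← px_pt_comm hX2]
    have hev : pt X =ᶠ[nhds z] fun q => c (u q) * px X q := by
      filter_upwards [hUz] with q hq
      linarith [hXchar q hq]
    have h1 := hev.fderiv_eq (𝕜 := ℝ)
    rw [(hdc.fun_mul hdXx).fderiv] at h1
    have h2 := congrArg (fun L => L ((1, 0) : ℝ × ℝ)) h1
    simpa [px] using h2
  have husymm := px_pt_comm hu2
  have hE := hE2 z hz
  have hXz := hXx z hz
  have hcz := hcpos (u z)
  have hdR := hdut.fun_add (hdc.fun_mul hdux)
  have hpos : 0 < 1 + (pt u z + c (u z) * px u z) ^ 2 := by positivity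
  have hdpow : HasDerivAt (fun r : ℝ => (1 + r ^ 2) ^ (1/(2*lam)))
      (2 * (pt u z + c (u z) * px u z) * (1/(2*lam))
        * (1 + (pt u z + c (u z) * px u z) ^ 2) ^ (1/(2*lam) - 1))
      (pt u z + c (u z) * px u z) := by
    have h := (((hasDerivAt_id (pt u z + c (u z) * px u z)).fun_pow 2).const_add 1).rpow_const
      (p := 1/(2*lam)) (Or.inl hpos.ne')
    simpa using h
  have hdp := (hdpow.comp_hasFDerivAt z hdR).fun_mul
    ((hasDerivAt_inv hXz.ne').comp_hasFDerivAt z hdXx)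
  simp only [Function.comp_def, ← div_eq_mul_inv] at hdp
  have hrpow : (1 + (pt u z + c (u z) * px u z) ^ 2) ^ (1/(2*lam))
      = (1 + (pt u z + c (u z) * px u z) ^ 2) ^ (1/(2*lam) - 1)
        * (1 + (pt u z + c (u z) * px u z) ^ 2) := by
    rw [Real.rpow_sub_one hpos.ne', div_mul_cancel₀ _ hpos.ne']
  have hpt : ∀ f, pt f z = fderiv ℝ f z (0, 1) := fun _ => rfl
  have hpx : ∀ f, px f z = fderiv ℝ f z (1, 0) := fun _ => rfl
  rw [hpt (fun q => _ / _), hpx (fun q => _ / _), hdp.fderiv]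
  simp only [add_apply, smul_apply, smul_eq_mul, ← hpt, ← hpx]
  rw [hrpow, hXtx, husymm, eq_add_of_sub_eq (sub_eq_zero.mp hE)]
  generalize (1 + (pt u z + c (u z) * px u z) ^ 2) ^ (1/(2*lam) - 1) = G
  field_simp
  ring
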